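/- Let θ ≥ ω₂ be a cardinal and let M be an elementary submodel of H_θ which is an ω₁-guessing set. Then ω₁ ⊆ M. -/

import Mathlib

noncomputable section
namespace GuessingPaper

/- Framework: we work in Mathlib's model `ZFSet` of ZFC, viewed as the ground
model `V`.  A generic extension `V[G]` is represented via a (hypothetical)
`V`-generic filter `G : Set ZFSet`; subsets of ground-model sets belonging to
`V[G]` are represented as classes `x : Set ZFSet` of the form
`{y | ∃ p ∈ G, (y, p) ∈ A}` for some ground set `A` (this is exactly the class
of `G`-evaluations of `ℙ`-names for subsets of ground sets). -/



open FirstOrder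

/-- `x` is a (von Neumann) ordinal. -/
def IsOrd (x : ZFSet) : Prop := x.IsOrdinal

/-- `x` is countable. -/
def Ctble (x : ZFSet) : Prop := x.toSet.Countable

/-- iterated unions, for the transitive closure -/
def unions : ℕ → ZFSet → ZFSet
  | 0, x => x
  | n + 1, x => ZFSet.sUnion (unions n x)

/-- the transitive closure of `x` (as a class) -/
def tcl (x : ZFSet) : Set ZFSet := ⋃ n : ℕ, (unions n x).toSet

/-- `H_θ`: the class of sets hereditarily of cardinality `< θ`. -/
def HSet (θ : Cardinal) : Set ZFSet := {x | Cardinal.mk ↥(tcl x) < θ}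

/-- `x` is a member of `ω₂`, i.e. an ordinal of cardinality `≤ ℵ₁`. -/
def MemOmega2 (x : ZFSet) : Prop := IsOrd x ∧ Cardinal.mk ↥x.toSet ≤ Cardinal.aleph 1

/-- `M` has size `ω₁`. -/
def SizeOmega1 (M : ZFSet) : Prop := Cardinal.mk ↥M.toSet = Cardinal.aleph 1

/-- `𝒫_{ω₂}(H_θ)`: subsets of `H_θ` of size `< ω₂`. -/
def Pom2 (θ : Cardinal) : Set ZFSet :=
  {M | M.toSet ⊆ HSet θ ∧ Cardinal.mk ↥M.toSet < Cardinal.aleph 2}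

/-- `ω₁ ⊆ M`: every countable ordinal belongs to `M`. -/
def Omega1Sub (M : ZFSet) : Prop := ∀ x, IsOrd x → Ctble x → x ∈ M

/-- `M ∩ ω₂ ∈ ω₂`. -/
def CapOmega2 (M : ZFSet) : Prop :=
  ∃ δ, MemOmega2 δ ∧ ∀ x, MemOmega2 x → (x ∈ M ↔ x ∈ δ)

/-- the ∈-structure on a class of sets, in the language with one binary relation -/
def memStructure (S : Set ZFSet) : Language.order.Structure S :=
  @Language.orderStructure S ⟨fun x y => (x : ZFSet) ∈ (y : ZFSet)⟩

/-- `M ≺ N` : `M` is an elementary submodel of `N` (as ∈-structures). -/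
def ElemSub (M N : Set ZFSet) : Prop :=
  M ⊆ N ∧ ∀ (k : ℕ) (φ : Language.order.Formula (Fin k)) (v : Fin k → ZFSet)
    (hM : ∀ i, v i ∈ M) (hN : ∀ i, v i ∈ N),
    (@Language.Formula.Realize _ _ (memStructure M) _ φ (fun i => ⟨v i, hM i⟩)) ↔
    (@Language.Formula.Realize _ _ (memStructure N) _ φ (fun i => ⟨v i, hN i⟩))

/-! ### Guessing models (in `V`) -/

/-- `x` is bounded in `M`. -/
def BoundedIn (M x : ZFSet) : Prop := ∃ X, X ∈ M ∧ x ⊆ X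

/-- `x` is `ω₁`-approximated in `M`. -/
def ApproxIn (M x : ZFSet) : Prop := ∀ a, a ∈ M → Ctble a → a ∩ x ∈ M

/-- `x` is guessed in `M`. -/
def GuessedIn (M x : ZFSet) : Prop := ∃ y, y ∈ M ∧ y ∩ M = x ∩ M

/-- `M` is an `ω₁`-guessing set. -/
def IsGuessing (M : ZFSet) : Prop :=
  ∀ x : ZFSet, BoundedIn M x → (ApproxIn M x ↔ GuessedIn M x)



/-! ### Forcing -/

/-- `p ≤ q` in the order coded by the set of (Kuratowski) pairs `le`. -/
def Le (le p q : ZFSet) : Prop := ZFSet.pair p q ∈ le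

/-- `(P, le)` is a forcing notion: `le` is a preorder on `P`, coded as a set of pairs. -/
def IsForcing (P le : ZFSet) : Prop :=
  (∀ x ∈ le, ∃ p ∈ P, ∃ q ∈ P, x = ZFSet.pair p q) ∧
  (∀ p ∈ P, Le le p p) ∧
  (∀ p q r : ZFSet, Le le p q → Le le q r → Le le p r)

/-- `p` and `q` are compatible. -/
def Compat (P le p q : ZFSet) : Prop := ∃ r, r ∈ P ∧ Le le r p ∧ Le le r q

/-- `D` is a dense subset of the forcing `(P, le)`. -/
def DenseSub (P le D : ZFSet) : Prop := D ⊆ P ∧ ∀ p ∈ P, ∃ q ∈ D, Le le q p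

/-- the class `D` is dense in `(P, le)`. -/
def DenseClass (P le : ZFSet) (D : Set ZFSet) : Prop :=
  (∀ p ∈ D, p ∈ P) ∧ ∀ p ∈ P, ∃ q ∈ D, Le le q p

/-- the class `D` is predense below `p`. -/
def PredenseBelow (P le : ZFSet) (D : Set ZFSet) (p : ZFSet) : Prop :=
  ∀ r, r ∈ P → Le le r p → ∃ s ∈ D, Compat P le s r

/-- `q` is an `(M, ℙ)`-generic condition. -/
def MGenericCond (P le M q : ZFSet) : Prop :=
  ∀ D : ZFSet, DenseSub P le D → D ∈ M →
    PredenseBelow P le {s | s ∈ M ∧ s ∈ D} q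

/-- `G` is a filter on `(P, le)`. -/
def IsVFilter (P le : ZFSet) (G : Set ZFSet) : Prop :=
  G.Nonempty ∧ (∀ p ∈ G, p ∈ P) ∧
  (∀ p ∈ G, ∀ q, q ∈ P → Le le p q → q ∈ G) ∧
  (∀ p ∈ G, ∀ q ∈ G, ∃ r ∈ G, Le le r p ∧ Le le r q)

/-- `G` is a `V`-generic filter on `(P, le)`: it meets every dense subset
(all of which belong to the ambient universe `V`). -/
def VGeneric (P le : ZFSet) (G : Set ZFSet) : Prop :=
  IsVFilter P le G ∧ ∀ D : ZFSet, DenseSub P le D → ∃ p ∈ G, p ∈ D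

/-- the class `x` is a set of the generic extension `V[G]` (as a subset of `V`):
it is the evaluation by `G` of a `ℙ`-name for a subset of a ground-model set. -/
def InExt (G : Set ZFSet) (x : Set ZFSet) : Prop :=
  ∃ A : ZFSet, x = {y | ∃ p ∈ G, ZFSet.pair y p ∈ A}

/-- the class `x` is (coded by) a set of the ground model `V`. -/
def InV (x : Set ZFSet) : Prop := ∃ z : ZFSet, x = z.toSet

/-- evaluation of a `ℙ`-name `τ` by a filter `G`:
`val G τ = { val G σ ∣ ∃ p ∈ G, (σ, p) ∈ τ }` (by `∈`-recursion). -/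
def val (G : Set ZFSet) : ZFSet → ZFSet :=
  (ZFSet.mem_wf.transGen).fix fun τ IH =>
    @ZFSet.image
      (fun σ => @dite ZFSet (Relation.TransGen (· ∈ ·) σ τ) (Classical.dec _)
        (fun h => IH σ h) (fun _ => ∅))
      (Classical.allZFSetDefinable _)
      (ZFSet.sep (fun σ => ∃ p ∈ G, ZFSet.pair σ p ∈ τ)
        (ZFSet.sUnion (ZFSet.sUnion τ)))

/-- `M[G]`: the class of evaluations by `G` of names belonging to `M`. -/
def MExt (G : Set ZFSet) (M : ZFSet) : Set ZFSet := {x | ∃ τ, τ ∈ M ∧ val G τ = x}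




/-! ### Notions of the generic extension `V[G]` -/

/-- `a` is countable in `V[G]`: there is an enumeration of `a` by `ω` in `V[G]`. -/
def CtbleExt (G : Set ZFSet) (a : ZFSet) : Prop :=
  ∃ R : Set ZFSet, InExt G R ∧
    (∀ z ∈ R, ∃ n, n ∈ ZFSet.omega ∧ ∃ y, y ∈ a ∧ z = ZFSet.pair n y) ∧
    (∀ n y y', ZFSet.pair n y ∈ R → ZFSet.pair n y' ∈ R → y = y') ∧
    (∀ y, y ∈ a → ∃ n, n ∈ ZFSet.omega ∧ ZFSet.pair n y ∈ R)

/-- in `V[G]`, the set (coded by) `x` is `ω₁`-approximated in `M`. -/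
def ApproxInExt (G : Set ZFSet) (M : ZFSet) (x : Set ZFSet) : Prop :=
  ∀ a, a ∈ M → CtbleExt G a → ∃ z, z ∈ M ∧ z.toSet = a.toSet ∩ x

/-- the set (coded by) `x` is guessed in `M`. -/
def GuessedInExt (M : ZFSet) (x : Set ZFSet) : Prop :=
  ∃ y, y ∈ M ∧ y.toSet ∩ M.toSet = x ∩ M.toSet

/-- `M` is an `ω₁`-guessing set in the generic extension `V[G]`. -/
def GuessingInExt (G : Set ZFSet) (M : ZFSet) : Prop :=
  ∀ x : Set ZFSet, InExt G x → (∃ X, X ∈ M ∧ x ⊆ X.toSet) →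
    (ApproxInExt G M x ↔ GuessedInExt M x)

/-- in `V[G]` there is a surjection from `ω` onto `ω₁^V` (i.e. `ω₁` is collapsed). -/
def CollapsesOmega1 (G : Set ZFSet) : Prop :=
  ∃ R : Set ZFSet, InExt G R ∧
    (∀ n y y', ZFSet.pair n y ∈ R → ZFSet.pair n y' ∈ R → y = y') ∧
    (∀ x, IsOrd x → Ctble x → ∃ n, n ∈ ZFSet.omega ∧ ZFSet.pair n x ∈ R)

/-- in `V[G]` there is a surjection from an ordinal `< ω₂^V` onto `ω₂^V`. -/
def CollapsesOmega2 (G : Set ZFSet) : Prop :=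
  ∃ δ : ZFSet, IsOrd δ ∧ Cardinal.mk ↥δ.toSet ≤ Cardinal.aleph 1 ∧
    ∃ R : Set ZFSet, InExt G R ∧
      (∀ β y y', ZFSet.pair β y ∈ R → ZFSet.pair β y' ∈ R → y = y') ∧
      (∀ x, MemOmega2 x → ∃ β, β ∈ δ ∧ ZFSet.pair β x ∈ R)

/-- the class `x` has size `< ω₂` in `V[G]`: in `V[G]` it is the surjective image of an
ordinal of size `≤ ℵ₁`. -/
def LtOmega2Ext (G : Set ZFSet) (x : Set ZFSet) : Prop :=
  ∃ δ : ZFSet, IsOrd δ ∧ Cardinal.mk ↥δ.toSet ≤ Cardinal.aleph 1 ∧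
    ∃ R : Set ZFSet, InExt G R ∧
      (∀ β y y', ZFSet.pair β y ∈ R → ZFSet.pair β y' ∈ R → y = y') ∧
      (∀ y ∈ x, ∃ β, β ∈ δ ∧ ZFSet.pair β y ∈ R)


/-! ### Stationarity, properness, and the guessing-model principles -/

/-- `M` is closed under `F` (viewed as a function on finite subsets). -/
def ClosedUnderF (F : ZFSet → ZFSet) (M : ZFSet) : Prop :=
  ∀ a : ZFSet, a ⊆ M → a.toSet.Finite → F a ⊆ M

/-- `F` maps `𝒫_ω(H_θ)` into `𝒫_{ω₂}(H_θ)`. -/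
def GoodF (θ : Cardinal) (F : ZFSet → ZFSet) : Prop :=
  ∀ a : ZFSet, a.toSet ⊆ HSet θ → a.toSet.Finite →
    (F a).toSet ⊆ HSet θ ∧ Cardinal.mk ↥(F a).toSet < Cardinal.aleph 2

/-- `S` is stationary in `𝒫_{ω₂}(H_θ)`: every `F : 𝒫_ω(H_θ) → 𝒫_{ω₂}(H_θ)` has a closure
point `M ≺ H_θ` in `S` with `M ∩ ω₂ ∈ ω₂`. -/
def Stationary (θ : Cardinal) (S : Set ZFSet) : Prop :=
  ∀ F : ZFSet → ZFSet, GoodF θ F →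
    ∃ M ∈ S, ElemSub M.toSet (HSet θ) ∧ CapOmega2 M ∧ ClosedUnderF F M

/-- the value `F(a)` of the function (of `V[G]`) coded by the relation `R`. -/
def FExtVal (R : Set ZFSet) (a : ZFSet) : Set ZFSet := {y | ZFSet.pair a y ∈ R}

/-- the relation `R` codes a function `F : 𝒫_ω(H_θ^V) → 𝒫_{ω₂}(H_θ^V)` of `V[G]`. -/
def GoodFExt (G : Set ZFSet) (θ : Cardinal) (R : Set ZFSet) : Prop :=
  ∀ a : ZFSet, a.toSet ⊆ HSet θ → a.toSet.Finite →
    FExtVal R a ⊆ HSet θ ∧ LtOmega2Ext G (FExtVal R a)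

/-- in `V[G]`, the set `S` (of the ground model) is stationary in `𝒫_{ω₂}(H_θ^V)`:
every function `F : 𝒫_ω(H_θ^V) → 𝒫_{ω₂}(H_θ^V)` belonging to `V[G]` has a closure point
`M ≺ H_θ^V` in `S` with `M ∩ ω₂ ∈ ω₂`. -/
def StationaryExt (G : Set ZFSet) (θ : Cardinal) (S : Set ZFSet) : Prop :=
  ∀ R : Set ZFSet, InExt G R → GoodFExt G θ R →
    ∃ M ∈ S, ElemSub M.toSet (HSet θ) ∧ CapOmega2 M ∧
      ∀ a : ZFSet, a ⊆ M → a.toSet.Finite → FExtVal R a ⊆ M.toSet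

/-- the forcing `(P, le)` is proper for the family `S` of models. -/
def ProperFor (P le : ZFSet) (S : Set ZFSet) : Prop :=
  ∀ M ∈ S, ∀ p, p ∈ M → p ∈ P → ∃ q, q ∈ P ∧ Le le q p ∧ MGenericCond P le M q

/-- the forcing `(P, le)` is proper for models of size `ω₁`, i.e. for all
`M ≺ (H_θ, ∈, ℙ)` with `ω₁ ⊆ M` and `|M| = ω₁`, for every sufficiently large regular `θ`. -/
def ProperForSizeOmega1 (P le : ZFSet) : Prop :=
  ∃ θ₀ : Cardinal, ∀ θ : Cardinal, θ₀ ≤ θ → θ.IsRegular →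
    ProperFor P le {M | ElemSub M.toSet (HSet θ) ∧ P ∈ M ∧ le ∈ M ∧
      Omega1Sub M ∧ SizeOmega1 M}

/-- the forcing `(P, le)` preserves `ω₁`. -/
def PreservesOmega1 (P le : ZFSet) : Prop :=
  ∀ G : Set ZFSet, VGeneric P le G → ¬ CollapsesOmega1 G

/-- the forcing `(P, le)` preserves the cardinal `ω₂`. -/
def PreservesOmega2 (P le : ZFSet) : Prop :=
  ∀ G : Set ZFSet, VGeneric P le G → ¬ CollapsesOmega2 G

/-- the forcing `(P, le)` has the `ω₁`-approximation property. -/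
def ApproxProp (P le : ZFSet) : Prop :=
  ∀ G : Set ZFSet, VGeneric P le G →
    ∀ x : Set ZFSet, InExt G x → (∃ X : ZFSet, x ⊆ X.toSet) →
      (∀ a : ZFSet, Ctble a → InV (a.toSet ∩ x)) → InV x

/-- `GMP(ω₂)`: for every regular `θ ≥ ω₂`, the `ω₁`-guessing elementary submodels of `H_θ`
of size `ω₁` are stationary in `𝒫_{ω₂}(H_θ)`. -/
def GMP : Prop :=
  ∀ θ : Cardinal.{1}, Cardinal.aleph 2 ≤ θ → θ.IsRegular →
    Stationary θ {M | M ∈ Pom2 θ ∧ ElemSub M.toSet (HSet θ) ∧ SizeOmega1 M ∧ IsGuessing M}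

/-- `M` is indestructibly `ω₁`-guessing: it is `ω₁`-guessing and remains so in any
generic extension by an `ω₁`-preserving forcing. -/
def IndestructiblyGuessing (M : ZFSet) : Prop :=
  IsGuessing M ∧ ∀ P le : ZFSet, IsForcing P le → PreservesOmega1 P le →
    ∀ G : Set ZFSet, VGeneric P le G → GuessingInExt G M

/-- `IGMP(ω₂)`: for every regular `θ ≥ ω₂` there are stationarily many indestructibly
`ω₁`-guessing `M ∈ 𝒫_{ω₂}(H_θ)`. -/
def IGMP : Prop :=
  ∀ θ : Cardinal.{1}, Cardinal.aleph 2 ≤ θ → θ.IsRegular →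
    Stationary θ {M | M ∈ Pom2 θ ∧ IndestructiblyGuessing M}

/-- `ℙ-IGMP(ω₂)`: for every sufficiently large regular `θ`, the `ω₁`-guessing sets of size
`ω₁` that remain `ω₁`-guessing after forcing with `ℙ = (P, le)` are stationary in
`𝒫_{ω₂}(H_θ)`. -/
def PIGMP (P le : ZFSet) : Prop :=
  ∃ θ₀ : Cardinal, ∀ θ : Cardinal, θ₀ ≤ θ → θ.IsRegular →
    Stationary θ {M | M ∈ Pom2 θ ∧ SizeOmega1 M ∧ IsGuessing M ∧
      ∀ G : Set ZFSet, VGeneric P le G → GuessingInExt G M}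

/-- `FA({ℙ}, ω₁)`: for every family of `ω₁`-many dense subsets of `ℙ = (P, le)` there is a
filter meeting all of them. -/
def FAomega1 (P le : ZFSet) : Prop :=
  ∀ D : Set ZFSet, (∀ d ∈ D, DenseSub P le d) → Cardinal.mk ↥D ≤ Cardinal.aleph 1 →
    ∃ G : Set ZFSet, IsVFilter P le G ∧ ∀ d ∈ D, ∃ p ∈ G, p ∈ d



/-! ### Auxiliary material for the proof -/

/-- auxiliary formulas with eight variables -/
inductive AF : Type
  | mem (i j : Fin 8) : AF
  | eq (i j : Fin 8) : AF
  | not (φ : AF) : AF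
  | and (φ ψ : AF) : AF
  | ex (i : Fin 8) (φ : AF) : AF

namespace AF

/-- satisfaction -/
def sat (S : Set ZFSet) : (Fin 8 → ZFSet) → AF → Prop
  | v, mem i j => v i ∈ v j
  | v, eq i j => v i = v j
  | v, not φ => ¬ sat S v φ
  | v, and φ ψ => sat S v φ ∧ sat S v ψ
  | v, ex i φ => ∃ a ∈ S, sat S (Function.update v i a) φ

/-- translation into first-order formulas -/
def tr : AF → Language.order.Formula (Fin 8)
  | mem i j => Language.Relations.formula₂ Language.orderRel.le (Language.Term.var i) (Language.Term.var j)
  | eq i j => Language.Term.equal (Language.Term.var i) (Language.Term.var j)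
  | not φ => ∼(tr φ)
  | and φ ψ => tr φ ⊓ tr ψ
  | ex i φ => Language.Formula.iExs Unit
      (Language.Formula.relabel (fun n => if n = i then Sum.inr () else Sum.inl n) (tr φ))

theorem realize_tr (S : Set ZFSet) (φ : AF) : ∀ (v : Fin 8 → ZFSet) (hv : ∀ i, v i ∈ S),
    (@Language.Formula.Realize _ _ (memStructure S) _ (tr φ) (fun i => ⟨v i, hv i⟩)) ↔
      sat S v φ := by
  letI := memStructure S
  induction φ with
  | mem i j =>
    intro v hv
    simp only [tr, sat, Language.Formula.realize_rel₂]
    exact Iff.rfl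
  | eq i j =>
    intro v hv
    simp [tr, sat, Language.Formula.realize_equal]
  | not φ ih =>
    intro v hv
    simp only [tr, sat, Language.Formula.realize_not, ih]
  | and φ ψ ih1 ih2 =>
    intro v hv
    simp only [tr, sat, Language.Formula.realize_inf, ih1, ih2]
  | ex i φ ih =>
    intro v hv
    simp only [tr, sat, Language.Formula.realize_iExs, Language.Formula.realize_relabel]
    have key : ∀ a : S, (Sum.elim (fun i => (⟨v i, hv i⟩ : S)) (fun _ : Unit => a) ∘
        fun n => if n = i then Sum.inr () else Sum.inl n) =
        fun n => ⟨Function.update v i a.1 n, by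
          by_cases h : n = i
          · subst h; simp
          · simp [h, hv]⟩ := by
      intro a
      funext n
      by_cases h : n = i
      · subst h; simp
      · simp [h]
    constructor
    · rintro ⟨f, hf⟩
      have : f = fun _ => f () := rfl
      rw [this, key, ih] at hf
      exact ⟨_, (f ()).2, hf⟩
    · rintro ⟨a, ha, h⟩
      refine ⟨fun _ => ⟨a, ha⟩, ?_⟩
      rw [key, ih]
      exact h

/-- Tarski–Vaught -/
theorem tv {M N : Set ZFSet} (hM : ElemSub M N) (φ : AF) (i : Fin 8) (v : Fin 8 → ZFSet)
    (hv : ∀ i, v i ∈ M) (h : ∃ a ∈ N, sat N (Function.update v i a) φ) :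
    ∃ a ∈ M, sat N (Function.update v i a) φ := by
  have key : ∀ (φ : AF) (v : Fin 8 → ZFSet) (hv : ∀ i, v i ∈ M), sat M v φ ↔ sat N v φ := by
    intro φ v hv
    rw [← realize_tr M φ v hv, ← realize_tr N φ v (fun i => hM.1 (hv i))]
    exact hM.2 8 (tr φ) v hv (fun i => hM.1 (hv i))
  obtain ⟨a, ha, h⟩ := (key (ex i φ) v hv).2 h
  refine ⟨a, ha, (key φ _ ?_).1 h⟩
  intro n
  by_cases h : n = i
  · subst h; simpa
  · simp [h, hv]

/-- cofinality formula; variables 6 and 7 are bound -/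
def cof (c a : Fin 8) : AF :=
  not (ex 6 (and (mem 6 a) (not (ex 7 (and (mem 7 a) (and (mem 7 c) (mem 6 7)))))))

/-- nonemptiness formula -/
def ne (a : Fin 8) : AF := ex 7 (mem 7 a)

end AF

/-- `c` is cofinal in `α` -/
def Cof (c α : ZFSet) : Prop := ∀ β ∈ α, ∃ γ ∈ α, γ ∈ c ∧ β ∈ γ

/-- transitive class -/
def TrC (S : Set ZFSet) : Prop := ∀ x y : ZFSet, x ∈ y → y ∈ S → x ∈ S

theorem AF.sat_cof {S : Set ZFSet} (hS : TrC S) (v : Fin 8 → ZFSet) (c a : Fin 8)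
    (h : v a ∈ S) (hc6 : c ≠ 6) (hc7 : c ≠ 7) (ha6 : a ≠ 6) (ha7 : a ≠ 7) :
    AF.sat S v (AF.cof c a) ↔ Cof (v c) (v a) := by
  simp only [AF.cof, AF.sat, Function.update_self, Function.update_of_ne ha6,
    Function.update_of_ne ha7, Function.update_of_ne hc6, Function.update_of_ne hc7, Cof]
  have : (6 : Fin 8) ≠ 7 := by decide
  simp only [Function.update_of_ne this, Function.update_self]
  constructor
  · intro H β hβ
    by_contra hcon
    exact H ⟨β, hS _ _ hβ h, hβ, fun ⟨γ, _, h1, h2, h3⟩ => hcon ⟨γ, h1, h2, h3⟩⟩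
  · rintro H ⟨β, _, hβ, hn⟩
    obtain ⟨γ, h1, h2, h3⟩ := H β hβ
    exact hn ⟨γ, hS _ _ h1 h, h1, h2, h3⟩

theorem AF.sat_ne {S : Set ZFSet} (hS : TrC S) (v : Fin 8 → ZFSet) (a : Fin 8)
    (h : v a ∈ S) (ha7 : a ≠ 7) :
    AF.sat S v (AF.ne a) ↔ (∃ x, x ∈ v a) := by
  simp only [AF.ne, AF.sat, Function.update_self, Function.update_of_ne ha7]
  exact ⟨fun ⟨x, _, h⟩ => ⟨x, h⟩, fun ⟨x, hx⟩ => ⟨x, hS _ _ hx h, hx⟩⟩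

/-! #### The class `H_θ` -/

theorem tcl_sub {x : ZFSet} {T : Set ZFSet} (hT : TrC T) (h : ∀ y ∈ x, y ∈ T) : tcl x ⊆ T := by
  have : ∀ n, ∀ y ∈ unions n x, y ∈ T := by
    intro n
    induction n with
    | zero => exact h
    | succ n ih =>
      intro y hy
      obtain ⟨z, hz, hyz⟩ := ZFSet.mem_sUnion.1 hy
      exact hT _ _ hyz (ih z hz)
  intro y hy
  obtain ⟨n, hn⟩ := Set.mem_iUnion.1 hy
  exact this n y hn

theorem tcl_trans (x : ZFSet) : TrC (tcl x) := by
  intro y z hyz hz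
  obtain ⟨n, hn⟩ := Set.mem_iUnion.1 hz
  exact Set.mem_iUnion.2 ⟨n + 1, ZFSet.mem_sUnion.2 ⟨z, hn, hyz⟩⟩

theorem mem_tcl {x y : ZFSet} (h : y ∈ x) : y ∈ tcl x := Set.mem_iUnion.2 ⟨0, h⟩

theorem HSet_trans (θ : Cardinal) : TrC (HSet θ) := by
  intro x y hxy hy
  refine lt_of_le_of_lt (Cardinal.mk_le_mk_of_subset ?_) hy
  exact tcl_sub (tcl_trans y) (fun z hz => tcl_trans y _ _ hz (mem_tcl hxy))

theorem HSet_subset {θ : Cardinal} {x y : ZFSet} (h : x ⊆ y) (hy : y ∈ HSet θ) : x ∈ HSet θ := by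
  refine lt_of_le_of_lt (Cardinal.mk_le_mk_of_subset ?_) hy
  exact tcl_sub (tcl_trans y) (fun z hz => mem_tcl (h hz))

theorem HSet_empty {θ : Cardinal} (hθ : Cardinal.aleph 2 ≤ θ) : ∅ ∈ HSet θ := by
  have : tcl ∅ = ∅ := by
    apply Set.subset_empty_iff.1
    apply tcl_sub
    · intro x y _ h; exact h.elim
    · intro y hy; exact (ZFSet.notMem_empty y hy).elim
  show Cardinal.mk ↥(tcl ∅) < θ
  rw [this]
  simp only [Cardinal.mk_emptyCollection]
  exact lt_of_lt_of_le (Cardinal.aleph_pos _) hθ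

theorem HSet_insert {θ : Cardinal} (hθ : Cardinal.aleph 2 ≤ θ) {a b : ZFSet}
    (ha : a ∈ HSet θ) (hb : b ∈ HSet θ) : insert b a ∈ HSet θ := by
  have h0 : Cardinal.aleph0 ≤ θ := (Cardinal.aleph0_le_aleph _).trans hθ
  have : tcl (insert b a) ⊆ (tcl a ∪ tcl b) ∪ {b} := by
    apply tcl_sub
    · rintro x y hxy ((h | h) | h)
      · exact Or.inl (Or.inl (tcl_trans _ _ _ hxy h))
      · exact Or.inl (Or.inr (tcl_trans _ _ _ hxy h))
      · rw [Set.mem_singleton_iff] at h; subst h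
        exact Or.inl (Or.inr (mem_tcl hxy))
    · intro y hy
      rcases ZFSet.mem_insert_iff.1 hy with h | h
      · exact Or.inr h
      · exact Or.inl (Or.inl (mem_tcl h))
  refine lt_of_le_of_lt (Cardinal.mk_le_mk_of_subset this) ?_
  refine lt_of_le_of_lt (Cardinal.mk_union_le _ _) ?_
  refine Cardinal.add_lt_of_lt h0 (lt_of_le_of_lt (Cardinal.mk_union_le _ _)
    (Cardinal.add_lt_of_lt h0 ha hb)) ?_
  simp only [Cardinal.mk_singleton]
  exact lt_of_lt_of_le Cardinal.one_lt_aleph0 h0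

theorem HSet_omega1 {θ : Cardinal} (hθ : Cardinal.aleph 2 ≤ θ) :
    (Cardinal.ord (Cardinal.aleph 1)).toZFSet ∈ HSet θ := by
  set w := (Cardinal.ord (Cardinal.aleph 1)).toZFSet with hw
  have : tcl w ⊆ w.toSet := by
    apply tcl_sub
    · intro x y hxy hy
      exact (ZFSet.isOrdinal_toZFSet _).mem_trans hxy hy
    · intro y hy; exact hy
  refine lt_of_le_of_lt (Cardinal.mk_le_mk_of_subset this) ?_
  refine lt_of_lt_of_le ?_ hθ
  have h := ZFSet.cardinalMk_coe_sort (x := w)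
  have h2 : Cardinal.mk ↥w.toSet = Cardinal.aleph 1 := by
    refine Eq.trans h ?_
    rw [hw]
    simp
  rw [h2]
  exact Cardinal.aleph_lt_aleph.2 (by norm_num)

/-! #### Combinatorics of cofinal sets -/

theorem not_cof_of_finite {c α : ZFSet} (h0 : ∃ x, x ∈ α) (hf : {x | x ∈ α ∧ x ∈ c}.Finite) :
    ¬ Cof c α := by
  intro h
  obtain ⟨x, hx⟩ := h0
  obtain ⟨y, hy, hyc, _⟩ := h x hx
  obtain ⟨m, hm, hmax⟩ := Set.exists_max_image _ ZFSet.rank hf ⟨y, hy, hyc⟩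
  obtain ⟨z, hz, hzc, hmz⟩ := h m hm.1
  exact absurd (hmax z ⟨hz, hzc⟩) (not_le.2 (ZFSet.rank_lt_of_mem hmz))

theorem exists_cof {κ : ZFSet} (hκ : κ.IsOrdinal) (hl : Cof κ κ) (d : ℕ → ZFSet)
    (hd : ∀ n, d n ∈ κ) (hd' : ∀ s ∈ κ, ∃ n, d n ∉ s) :
    ∃ c : ZFSet, c ⊆ κ ∧ Cof c κ ∧ ∀ s ∈ κ, {x | x ∈ s ∧ x ∈ c}.Finite := by
  have hg : ∀ a b : {x // x ∈ κ}, ∃ γ : {x // x ∈ κ}, a.1 ∈ γ.1 ∧ b.1 ∈ γ.1 := by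
    rintro ⟨a, ha⟩ ⟨b, hb⟩
    have main : ∀ a ∈ κ, ∀ b ∈ κ, a ⊆ b → ∃ γ ∈ κ, a ∈ γ ∧ b ∈ γ := by
      intro a ha b hb hab
      obtain ⟨γ, hγ, _, h⟩ := hl b hb
      exact ⟨γ, hγ, (hκ.mem ha).mem_of_subset_of_mem (hκ.mem hγ) hab h, h⟩
    rcases (hκ.mem ha).subset_total (hκ.mem hb) with h | h
    · obtain ⟨γ, h1, h2, h3⟩ := main a ha b hb h
      exact ⟨⟨γ, h1⟩, h2, h3⟩
    · obtain ⟨γ, h1, h2, h3⟩ := main b hb a ha h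
      exact ⟨⟨γ, h1⟩, h3, h2⟩
  choose g hg1 hg2 using hg
  let x : ℕ → {x // x ∈ κ} := fun n =>
    Nat.rec (g ⟨d 0, hd 0⟩ ⟨d 0, hd 0⟩) (fun n y => g y ⟨d (n + 1), hd (n + 1)⟩) n
  have hx1 : ∀ n, d n ∈ (x n).1 := by
    intro n
    cases n with
    | zero => exact hg1 _ _
    | succ n => exact hg2 _ _
  have hx2 : ∀ n, (x n).1 ∈ (x (n + 1)).1 := fun n => hg1 _ _
  have hx3 : ∀ n m, n ≤ m → (x n).1 ⊆ (x m).1 := by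
    intro n m h
    induction h with
    | refl => exact fun _ h => h
    | @step k h ih => exact fun z hz => (hκ.mem (x (k + 1)).2).mem_trans (ih hz) (hx2 k)
  have hs : ∀ s ∈ κ, ∃ n, s ∈ (x n).1 := by
    intro s hs
    obtain ⟨n, hn⟩ := hd' s hs
    refine ⟨n, (hκ.mem hs).mem_of_subset_of_mem (hκ.mem (x n).2) ?_ (hx1 n)⟩
    exact ((hκ.mem (hd n)).notMem_iff_subset (hκ.mem hs)).1 hn
  refine ⟨ZFSet.sep (fun y => ∃ n, (x n).1 = y) κ, ?_, ?_, ?_⟩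
  · intro y hy
    exact (ZFSet.mem_sep.1 hy).1
  · intro β hβ
    obtain ⟨n, hn⟩ := hs β hβ
    exact ⟨(x n).1, (x n).2, ZFSet.mem_sep.2 ⟨(x n).2, n, rfl⟩, hn⟩
  · intro s hsκ
    obtain ⟨n, hn⟩ := hs s hsκ
    refine ((Set.finite_Iio n).image (fun m => (x m).1)).subset ?_
    rintro y ⟨hys, hy⟩
    obtain ⟨m, rfl⟩ := (ZFSet.mem_sep.1 hy).2
    refine ⟨m, ?_, rfl⟩
    by_contra hmn
    have := hx3 n m (not_lt.1 hmn) hn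
    exact ZFSet.mem_asymm this hys

theorem exists_cof_countable {κ : ZFSet} (hκ : κ.IsOrdinal) (hl : Cof κ κ) (h0 : ∃ x, x ∈ κ)
    (a : ZFSet) (ha : Ctble a) (hu : ∀ s ∈ κ, ∃ β ∈ a, β ∈ κ ∧ β ∉ s) :
    ∃ c : ZFSet, c ⊆ κ ∧ Cof c κ ∧ ∀ s ∈ κ, {x | x ∈ s ∧ x ∈ c}.Finite := by
  have hc : {x | x ∈ a ∧ x ∈ κ}.Countable := Set.Countable.mono (fun x hx => hx.1) ha
  have hne : {x | x ∈ a ∧ x ∈ κ}.Nonempty := by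
    obtain ⟨x, hx⟩ := h0
    obtain ⟨β, h1, h2, _⟩ := hu x hx
    exact ⟨β, h1, h2⟩
  obtain ⟨d, hd⟩ := hc.exists_eq_range hne
  refine exists_cof hκ hl d (fun n => ?_) (fun s hs => ?_)
  · have : d n ∈ {x | x ∈ a ∧ x ∈ κ} := by rw [hd]; exact ⟨n, rfl⟩
    exact this.2
  · obtain ⟨β, h1, h2, h3⟩ := hu s hs
    have : β ∈ {x | x ∈ a ∧ x ∈ κ} := ⟨h1, h2⟩
    rw [hd] at this
    obtain ⟨n, rfl⟩ := this
    exact ⟨n, h3⟩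

theorem omega1_cof (c : ZFSet) (h : Cof c (Cardinal.ord (Cardinal.aleph 1)).toZFSet) :
    ∃ α ∈ (Cardinal.ord (Cardinal.aleph 1)).toZFSet, (∃ x, x ∈ α) ∧ Cof c α := by
  have hf : ∀ o : Ordinal, ∃ p : Ordinal, o < Cardinal.ord (Cardinal.aleph 1) →
      p < Cardinal.ord (Cardinal.aleph 1) ∧ p.toZFSet ∈ c ∧ o < p := by
    intro o
    by_cases ho : o < Cardinal.ord (Cardinal.aleph 1)
    · obtain ⟨γ, h1, h2, h3⟩ := h o.toZFSet (Ordinal.toZFSet_mem_toZFSet_iff.2 ho)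
      obtain ⟨p, hp, rfl⟩ := Ordinal.mem_toZFSet_iff.1 h1
      exact ⟨p, fun _ => ⟨hp, h2, Ordinal.toZFSet_mem_toZFSet_iff.1 h3⟩⟩
    · exact ⟨0, fun h => absurd h ho⟩
  choose f hf using hf
  let x : ℕ → Ordinal := fun n => f^[n] 0
  have hpos : (0 : Ordinal) < Cardinal.ord (Cardinal.aleph 1) := by
    rw [Cardinal.lt_ord]; simp
  have hxs : ∀ n, x (n + 1) = f (x n) := fun n => Function.iterate_succ_apply' f n 0
  have hx : ∀ n, x n < Cardinal.ord (Cardinal.aleph 1) := by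
    intro n
    induction n with
    | zero => exact hpos
    | succ n ih => rw [hxs]; exact (hf _ ih).1
  have hlt : ∀ n, x n < x (n + 1) := fun n => by rw [hxs]; exact (hf _ (hx n)).2.2
  have hmc : ∀ n, (x (n + 1)).toZFSet ∈ c := fun n => by rw [hxs]; exact (hf _ (hx n)).2.1
  have hle : ∀ n, x n < ⨆ n, x n := fun n =>
    lt_of_lt_of_le (hlt n) (Ordinal.le_iSup x (n + 1))
  have hsup : (⨆ n, x n) < Cardinal.ord (Cardinal.aleph 1) := by
    rw [Cardinal.ord_aleph] at hx ⊢
    exact Ordinal.iSup_lt_omega_one hx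
  refine ⟨(⨆ n, x n).toZFSet, Ordinal.toZFSet_mem_toZFSet_iff.2 hsup,
    ⟨(x 0).toZFSet, Ordinal.toZFSet_mem_toZFSet_iff.2 (hle 0)⟩, ?_⟩
  intro β hβ
  obtain ⟨o, ho, rfl⟩ := Ordinal.mem_toZFSet_iff.1 hβ
  obtain ⟨n, hn⟩ := Ordinal.lt_iSup_iff.1 ho
  exact ⟨(x (n + 1)).toZFSet, Ordinal.toZFSet_mem_toZFSet_iff.2 (hle _), hmc n,
    Ordinal.toZFSet_mem_toZFSet_iff.2 (hn.trans (hlt n))⟩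

theorem omega1_limit : Cof (Cardinal.ord (Cardinal.aleph 1)).toZFSet
    (Cardinal.ord (Cardinal.aleph 1)).toZFSet := by
  intro β hβ
  obtain ⟨o, ho, rfl⟩ := Ordinal.mem_toZFSet_iff.1 hβ
  have h := (Cardinal.isSuccLimit_ord (Cardinal.aleph0_le_aleph 1)).succ_lt ho
  have h1 := Ordinal.toZFSet_mem_toZFSet_iff.2 h
  exact ⟨_, h1, h1, Ordinal.toZFSet_mem_toZFSet_iff.2 (Order.lt_succ o)⟩

/-! #### Consequences of elementarity -/

theorem el_nonempty {θ : Cardinal} {M : ZFSet} (hθ : Cardinal.aleph 2 ≤ θ)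
    (hM : ElemSub M.toSet (HSet θ)) : ∃ a, a ∈ M := by
  by_contra hcon
  have h := hM.2 0 (Language.BoundedFormula.all Language.BoundedFormula.falsum)
    (fun i => i.elim0) (fun i => i.elim0) (fun i => i.elim0)
  have h1 := h.1 (fun a => (hcon ⟨a.1, a.2⟩).elim)
  exact h1 ⟨∅, HSet_empty hθ⟩

/-- assignment with three relevant values -/
def asg (a b c : ZFSet) : Fin 8 → ZFSet := ![a, b, c, a, a, a, a, a]

theorem asg_mem {S : Set ZFSet} {a b c : ZFSet} (ha : a ∈ S) (hb : b ∈ S) (hc : c ∈ S) :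
    ∀ i, asg a b c i ∈ S := by
  intro i
  fin_cases i <;> assumption

theorem el_empty {θ : Cardinal} {M : ZFSet} (hθ : Cardinal.aleph 2 ≤ θ)
    (hM : ElemSub M.toSet (HSet θ)) : ∅ ∈ M := by
  obtain ⟨m, hm⟩ := el_nonempty hθ hM
  have H := HSet_trans θ
  obtain ⟨a, ha, h⟩ := AF.tv hM (AF.not (AF.ne 0)) 0 (asg m m m) (asg_mem hm hm hm)
    ⟨∅, HSet_empty hθ, by
      rw [AF.sat, AF.sat_ne H _ _ (by simpa using HSet_empty hθ) (by decide)]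
      simp⟩
  rw [AF.sat, AF.sat_ne H _ _ (by simpa using hM.1 ha) (by decide)] at h
  have : a = ∅ := (ZFSet.eq_empty a).2 (by simpa using h)
  exact this ▸ ha

theorem el_insert {θ : Cardinal} {M : ZFSet} (hθ : Cardinal.aleph 2 ≤ θ)
    (hM : ElemSub M.toSet (HSet θ)) {a b : ZFSet} (ha : a ∈ M) (hb : b ∈ M) :
    insert b a ∈ M := by
  have H := HSet_trans θ
  have key := AF.tv hM (AF.not (AF.ex 3 (AF.not (AF.and
    (AF.not (AF.and (AF.mem 3 2) (AF.and (AF.not (AF.mem 3 0)) (AF.not (AF.eq 3 1)))))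
    (AF.and (AF.not (AF.and (AF.mem 3 0) (AF.not (AF.mem 3 2))))
     (AF.not (AF.and (AF.eq 3 1) (AF.not (AF.mem 3 2))))))))) 2 (asg a b a) (asg_mem ha hb ha)
  simp [AF.sat, asg] at key
  obtain ⟨z, hz, h⟩ := key (insert b a) (HSet_insert hθ (hM.1 ha) (hM.1 hb))
    (by intro y _; simp; tauto)
  have : z = insert b a := by
    ext y
    rw [ZFSet.mem_insert_iff]
    constructor
    · intro hy
      have := (h y (H _ _ hy (hM.1 hz))).1 hy
      tauto
    · rintro (rfl | hy)
      · exact (h y (hM.1 hb)).2.2 rfl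
      · exact (h y (H _ _ hy (hM.1 ha))).2.1 hy
  exact this ▸ hz

/-- the formula saying that `c` has a limit point in `k` -/
def AF.lp (c k : Fin 8) : AF := AF.ex 3 (AF.and (AF.mem 3 k) (AF.and (AF.ne 3) (AF.cof c 3)))

theorem AF.sat_lp {S : Set ZFSet} (hS : TrC S) (v : Fin 8 → ZFSet) (c k : Fin 8)
    (h : v k ∈ S) (hc3 : c ≠ 3) (hc6 : c ≠ 6) (hc7 : c ≠ 7) (hk3 : k ≠ 3) :
    AF.sat S v (AF.lp c k) ↔ ∃ α ∈ v k, (∃ x, x ∈ α) ∧ Cof (v c) α := by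
  have key : ∀ a ∈ S, (AF.sat S (Function.update v 3 a)
      (AF.and (AF.mem 3 k) (AF.and (AF.ne 3) (AF.cof c 3))) ↔
      a ∈ v k ∧ (∃ x, x ∈ a) ∧ Cof (v c) a) := by
    intro a ha
    simp only [AF.sat]
    rw [AF.sat_ne hS _ _ (by simpa using ha) (by decide),
      AF.sat_cof hS _ _ _ (by simpa using ha) hc6 hc7 (by decide) (by decide)]
    simp [Function.update_of_ne hc3, Function.update_of_ne hk3]
  rw [AF.lp, AF.sat]
  constructor
  · rintro ⟨a, ha, hs⟩
    exact ⟨a, (key a ha).1 hs⟩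
  · rintro ⟨a, hs⟩
    exact ⟨a, hS _ _ hs.1 h, (key a (hS _ _ hs.1 h)).2 hs⟩

theorem el_ord {θ : Cardinal} {M : ZFSet} (hθ : Cardinal.aleph 2 ≤ θ)
    (hM : ElemSub M.toSet (HSet θ)) : ∃ κ ∈ M, κ.IsOrdinal ∧ (∃ x, x ∈ κ) ∧ Cof κ κ ∧
      ∀ c ∈ HSet θ, Cof c κ → ∃ α ∈ κ, (∃ x, x ∈ α) ∧ Cof c α := by
  have H := HSet_trans θ
  obtain ⟨m, hm⟩ := el_nonempty hθ hM
  let φ1 : AF := AF.not (AF.ex 3 (AF.and (AF.mem 3 0) (AF.ex 4 (AF.and (AF.mem 4 3)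
    (AF.not (AF.mem 4 0))))))
  let φ2 : AF := AF.not (AF.ex 3 (AF.and (AF.mem 3 0) (AF.ex 4 (AF.and (AF.mem 4 3)
    (AF.ex 5 (AF.and (AF.mem 5 4) (AF.not (AF.mem 5 3))))))))
  let φ3 : AF := AF.not (AF.ex 1 (AF.and (AF.cof 1 0) (AF.not (AF.lp 1 0))))
  let φ : AF := AF.and φ1 (AF.and φ2 (AF.and (AF.ne 0) (AF.and (AF.cof 0 0) φ3)))
  have key : ∀ κ ∈ HSet θ, (AF.sat (HSet θ) (Function.update (asg m m m) 0 κ) φ ↔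
      κ.IsOrdinal ∧ (∃ x, x ∈ κ) ∧ Cof κ κ ∧
      ∀ c ∈ HSet θ, Cof c κ → ∃ α ∈ κ, (∃ x, x ∈ α) ∧ Cof c α) := by
    intro κ hκ
    have e1 : AF.sat (HSet θ) (Function.update (asg m m m) 0 κ) φ1 ↔ κ.IsTransitive := by
      simp [φ1, AF.sat]
      constructor
      · intro h y hy z hz
        exact h y (H _ _ hy hκ) hy z (H _ _ hz (H _ _ hy hκ)) hz
      · intro h y _ hy z _ hz
        exact h y hy hz
    have e2 : AF.sat (HSet θ) (Function.update (asg m m m) 0 κ) φ2 ↔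
        ∀ y ∈ κ, y.IsTransitive := by
      simp [φ2, AF.sat]
      constructor
      · intro h w hw y hy z hz
        have hw' := H _ _ hw hκ
        have hy' := H _ _ hy hw'
        exact h w hw' hw y hy' hy z (H _ _ hz hy') hz
      · intro h w _ hw y _ hy z _ hz
        exact h w hw y hy hz
    have e3 : AF.sat (HSet θ) (Function.update (asg m m m) 0 κ) φ3 ↔
        ∀ c ∈ HSet θ, Cof c κ → ∃ α ∈ κ, (∃ x, x ∈ α) ∧ Cof c α := by
      have e : ∀ c, AF.sat (HSet θ) (Function.update (Function.update (asg m m m) 0 κ) 1 c)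
          (AF.and (AF.cof 1 0) (AF.not (AF.lp 1 0))) ↔
          (Cof c κ ∧ ¬ ∃ α ∈ κ, (∃ x, x ∈ α) ∧ Cof c α) := by
        intro c
        simp only [AF.sat]
        rw [AF.sat_cof H _ _ _ (by simpa using hκ) (by decide) (by decide) (by decide) (by decide),
          AF.sat_lp H _ _ _ (by simpa using hκ) (by decide) (by decide) (by decide) (by decide)]
        simp
      show (¬ ∃ c ∈ HSet θ, _) ↔ _
      simp only [e]
      constructor
      · intro h c hc h1
        by_contra h2
        exact h ⟨c, hc, h1, h2⟩
      · rintro h ⟨c, hc, h1, h2⟩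
        exact h2 (h c hc h1)
    have eA : ∀ (v : Fin 8 → ZFSet) (ψ χ : AF), AF.sat (HSet θ) v (AF.and ψ χ) ↔
        (AF.sat (HSet θ) v ψ ∧ AF.sat (HSet θ) v χ) := fun _ _ _ => Iff.rfl
    rw [eA, eA, eA, eA, e1, e2, e3, AF.sat_ne H _ _ (by simpa using hκ) (by decide),
      AF.sat_cof H _ _ _ (by simpa using hκ) (by decide) (by decide) (by decide) (by decide),
      ZFSet.isOrdinal_iff_forall_mem_isTransitive, Function.update_self, and_assoc]
  have h0 : ∃ x, x ∈ (Cardinal.ord (Cardinal.aleph 1)).toZFSet := by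
    refine ⟨(0 : Ordinal).toZFSet, Ordinal.toZFSet_mem_toZFSet_iff.2 ?_⟩
    rw [Cardinal.lt_ord]; simp
  obtain ⟨κ, hκ, h⟩ := AF.tv hM φ 0 (asg m m m) (asg_mem hm hm hm)
    ⟨_, HSet_omega1 hθ, (key _ (HSet_omega1 hθ)).2
      ⟨ZFSet.isOrdinal_toZFSet _, h0, omega1_limit, fun c _ hc => omega1_cof c hc⟩⟩
  exact ⟨κ, hκ, (key κ (hM.1 hκ)).1 h⟩

theorem el_cof {θ : Cardinal} {M : ZFSet}
    (hM : ElemSub M.toSet (HSet θ)) {κ : ZFSet} (hκ : κ ∈ M) (h : ∃ c ∈ HSet θ, Cof c κ ∧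
      ¬ ∃ α ∈ κ, (∃ x, x ∈ α) ∧ Cof c α) : ∃ c ∈ M, Cof c κ ∧
      ¬ ∃ α ∈ κ, (∃ x, x ∈ α) ∧ Cof c α := by
  have H := HSet_trans θ
  have e : ∀ c, AF.sat (HSet θ) (Function.update (asg κ κ κ) 1 c)
      (AF.and (AF.cof 1 0) (AF.not (AF.lp 1 0))) ↔
      (Cof c κ ∧ ¬ ∃ α ∈ κ, (∃ x, x ∈ α) ∧ Cof c α) := by
    intro c
    simp only [AF.sat]
    rw [AF.sat_cof H _ _ _ (by simpa [asg] using hM.1 hκ)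
        (by decide) (by decide) (by decide) (by decide),
      AF.sat_lp H _ _ _ (by simpa [asg] using hM.1 hκ)
        (by decide) (by decide) (by decide) (by decide)]
    simp [asg]
  obtain ⟨c, hc, h1⟩ := h
  obtain ⟨c, hc, h1⟩ := AF.tv hM _ 1 _ (asg_mem hκ hκ hκ) ⟨c, hc, (e c).2 h1⟩
  exact ⟨c, hc, (e c).1 h1⟩

theorem el_above {θ : Cardinal} {M : ZFSet}
    (hM : ElemSub M.toSet (HSet θ)) {c β κ : ZFSet} (hc : c ∈ M) (hβ : β ∈ M) (hκ : κ ∈ M)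
    (h : ∃ γ ∈ κ, γ ∈ c ∧ β ∈ γ) : ∃ γ ∈ M, γ ∈ κ ∧ γ ∈ c ∧ β ∈ γ := by
  have H := HSet_trans θ
  have key := AF.tv hM (AF.and (AF.mem 3 2) (AF.and (AF.mem 3 0) (AF.mem 1 3))) 3
    (asg c β κ) (asg_mem hc hβ hκ)
  simp [AF.sat, asg] at key
  obtain ⟨γ, h1, h2, h3⟩ := h
  exact key γ (H _ _ h1 (hM.1 hκ)) h1 h2 h3

theorem el_bound {θ : Cardinal} {M : ZFSet}
    (hM : ElemSub M.toSet (HSet θ)) {a κ : ZFSet} (ha : a ∈ M) (hκ : κ ∈ M)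
    (h : ∃ s ∈ κ, ∀ β ∈ a, β ∈ κ → β ∈ s) : ∃ s ∈ M, s ∈ κ ∧ ∀ β ∈ a, β ∈ κ → β ∈ s := by
  have H := HSet_trans θ
  have key := AF.tv hM (AF.and (AF.mem 3 1) (AF.not (AF.ex 4 (AF.and (AF.mem 4 0)
    (AF.and (AF.mem 4 1) (AF.not (AF.mem 4 3))))))) 3
    (asg a κ κ) (asg_mem ha hκ hκ)
  simp [AF.sat, asg] at key
  obtain ⟨s, h1, h2⟩ := h
  obtain ⟨s, hs, h1, h2⟩ := key s (H _ _ h1 (hM.1 hκ)) h1 (fun β _ => h2 β)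
  exact ⟨s, hs, h1, fun β hβ => h2 β (H _ _ hβ (hM.1 ha)) hβ⟩

theorem el_lim {θ : Cardinal} {M : ZFSet}
    (hM : ElemSub M.toSet (HSet θ)) {κ : ZFSet} (hκ : κ ∈ M)
    (h : ∃ β ∈ κ, ∀ γ ∈ κ, β ∉ γ) : ∃ β ∈ M, β ∈ κ ∧ ∀ γ ∈ κ, β ∉ γ := by
  have H := HSet_trans θ
  have key := AF.tv hM (AF.and (AF.mem 3 1) (AF.not (AF.ex 4 (AF.and (AF.mem 4 0)
    (AF.mem 3 4))))) 3
    (asg κ κ κ) (asg_mem hκ hκ hκ)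
  simp [AF.sat, asg] at key
  obtain ⟨s, h1, h2⟩ := h
  obtain ⟨s, hs, h1, h2⟩ := key s (H _ _ h1 (hM.1 hκ)) h1 (fun β _ => h2 β)
  exact ⟨s, hs, h1, fun β hβ => h2 β (H _ _ hβ (hM.1 hκ)) hβ⟩

theorem el_point {θ : Cardinal} {M : ZFSet}
    (hM : ElemSub M.toSet (HSet θ)) {c κ : ZFSet} (hc : c ∈ M) (hκ : κ ∈ M)
    (h : ∃ α ∈ κ, (∃ x, x ∈ α) ∧ Cof c α) : ∃ α ∈ M, α ∈ κ ∧ (∃ x, x ∈ α) ∧ Cof c α := by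
  have H := HSet_trans θ
  have e : ∀ α ∈ HSet θ, (AF.sat (HSet θ) (Function.update (asg c κ κ) 3 α)
      (AF.and (AF.mem 3 1) (AF.and (AF.ne 3) (AF.cof 0 3))) ↔
      α ∈ κ ∧ (∃ x, x ∈ α) ∧ Cof c α) := by
    intro α hα
    simp only [AF.sat]
    rw [AF.sat_ne H _ _ (by simpa using hα) (by decide),
      AF.sat_cof H _ _ _ (by simpa using hα) (by decide) (by decide) (by decide) (by decide)]
    simp [asg]
  obtain ⟨α, h1⟩ := h
  have hα := H _ _ h1.1 (hM.1 hκ)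
  obtain ⟨α, hα, h1⟩ := AF.tv hM _ 3 _ (asg_mem hc hκ hκ) ⟨α, hα, (e α hα).2 h1⟩
  exact ⟨α, hα, (e α (hM.1 hα)).1 h1⟩

/-- Let `θ ≥ ω₂` be a cardinal and let `M` be an elementary submodel of
`H_θ` which is an `ω₁`-guessing set.  Then `ω₁ ⊆ M`. -/
theorem omega1_subset_of_guessing (θ : Cardinal) (hθ : Cardinal.aleph 2 ≤ θ)
    (M : ZFSet) (hM : ElemSub M.toSet (HSet θ)) (hg : IsGuessing M) :
    Omega1Sub M := by
  intro δ₀ hδ₀ hcδ₀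
  by_contra hδ₀M
  -- the least ordinal not in `M`
  obtain ⟨δ, ⟨hδ, hcδ, hδM⟩, hmin⟩ := ZFSet.mem_wf.has_min
    {x : ZFSet | x.IsOrdinal ∧ Ctble x ∧ x ∉ M} ⟨δ₀, hδ₀, hcδ₀, hδ₀M⟩
  have hsub : ∀ x ∈ δ, x ∈ M := by
    intro x hx
    by_contra hxM
    exact hmin x ⟨hδ.mem hx, Set.Countable.mono (fun y hy => hδ.mem_trans hy hx) hcδ, hxM⟩ hx
  have hδ0 : ∃ x, x ∈ δ := by
    by_contra h
    have : δ = ∅ := (ZFSet.eq_empty δ).2 (fun y hy => h ⟨y, hy⟩)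
    exact hδM (this ▸ el_empty hθ hM)
  have hδl : Cof δ δ := by
    intro β hβ
    have h1 : insert β β ∈ M := el_insert hθ hM (hsub β hβ) (hsub β hβ)
    have h2 : insert β β ∈ δ := by
      rcases (ZFSet.isOrdinal_succ (hδ.mem hβ)).mem_trichotomous hδ with h | h | h
      · exact h
      · exact absurd (h ▸ h1) hδM
      · rcases ZFSet.mem_insert_iff.1 h with h | h
        · subst h; exact absurd hβ (ZFSet.mem_irrefl _)
        · exact absurd h (ZFSet.mem_asymm hβ)
    exact ⟨_, h2, h2, ZFSet.mem_insert _ _⟩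
  -- the least ordinal of `M` above `δ`
  have hex : ∃ κ, κ.IsOrdinal ∧ κ ∈ M ∧ δ ∈ κ := by
    obtain ⟨κ, hκM, hκ, hκ0, hκl, hκc⟩ := el_ord hθ hM
    refine ⟨κ, hκ, hκM, ?_⟩
    rcases hδ.mem_trichotomous hκ with h | h | h
    · exact h
    · exact absurd (h ▸ hκM) hδM
    · exfalso
      have hc : Ctble κ := Set.Countable.mono (fun y hy => hδ.mem_trans hy h) hcδ
      obtain ⟨c, h1, h2, h3⟩ := exists_cof_countable hκ hκl hκ0 κ hc
        (fun s hs => ⟨s, hs, hs, ZFSet.mem_irrefl _⟩)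
      obtain ⟨α, hα, hα0, hαc⟩ := hκc c (HSet_subset h1 (hM.1 hκM)) h2
      exact not_cof_of_finite hα0 (h3 α hα) hαc
  obtain ⟨κ, ⟨hκ, hκM, hδκ⟩, hκmin⟩ := ZFSet.mem_wf.has_min
    {κ : ZFSet | κ.IsOrdinal ∧ κ ∈ M ∧ δ ∈ κ} hex
  have hcap : ∀ x ∈ κ, x ∈ M → x ∈ δ := by
    intro x hx hxM
    rcases (hκ.mem hx).mem_trichotomous hδ with h | h | h
    · exact h
    · exact absurd (h ▸ hxM) hδM
    · exact absurd hx (hκmin x ⟨hκ.mem hx, hxM, h⟩)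
  have hκl : Cof κ κ := by
    by_contra hcon
    have : ∃ β ∈ κ, ∀ γ ∈ κ, β ∉ γ := by
      by_contra h2
      apply hcon
      intro β hβ
      by_contra h3
      exact h2 ⟨β, hβ, fun γ hγ hβγ => h3 ⟨γ, hγ, hγ, hβγ⟩⟩
    obtain ⟨β, hβM, hβ, h⟩ := el_lim hM hκM this
    exact h δ hδκ (hcap β hβ hβM)
  have hunc : ¬ ∃ c ∈ HSet θ, Cof c κ ∧ ¬ ∃ α ∈ κ, (∃ x, x ∈ α) ∧ Cof c α := by
    intro h
    obtain ⟨c, hcM, hc1, hc2⟩ := el_cof hM hκM h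
    apply hc2
    refine ⟨δ, hδκ, hδ0, ?_⟩
    intro β hβ
    obtain ⟨γ, hγM, h1, h2, h3⟩ := el_above hM hcM (hsub β hβ) hκM
      (hc1 β (hκ.mem_trans hβ hδκ))
    exact ⟨γ, hcap γ h1 hγM, h2, h3⟩
  obtain ⟨x, hxδ, hxc, hxf⟩ := exists_cof_countable hδ hδl hδ0 δ hcδ
    (fun s hs => ⟨s, hs, hs, ZFSet.mem_irrefl _⟩)
  have hfinM : ∀ s : Set ZFSet, s.Finite → (∀ y ∈ s, y ∈ M) →
      ∃ z ∈ M, ∀ y, y ∈ z ↔ y ∈ s := by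
    intro s hs
    induction s, hs using Set.Finite.induction_on with
    | empty => exact fun _ => ⟨∅, el_empty hθ hM, by simp⟩
    | @insert b s _ _ ih =>
      intro h
      obtain ⟨z, hz, hzs⟩ := ih (fun y hy => h y (Or.inr hy))
      refine ⟨insert b z, el_insert hθ hM hz (h b (Or.inl rfl)), fun y => ?_⟩
      rw [ZFSet.mem_insert_iff, Set.mem_insert_iff, hzs]
  have happ : ApproxIn M x := by
    intro a haM hac
    have hb : ∃ s ∈ κ, ∀ β ∈ a, β ∈ κ → β ∈ s := by
      by_contra hcon
      have hu : ∀ s ∈ κ, ∃ β ∈ a, β ∈ κ ∧ β ∉ s := by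
        intro s hs
        by_contra h2
        exact hcon ⟨s, hs, fun β h3 h4 => by
          by_contra h5
          exact h2 ⟨β, h3, h4, h5⟩⟩
      obtain ⟨c, h1, h2, h3⟩ := exists_cof_countable hκ hκl ⟨δ, hδκ⟩ a hac hu
      exact hunc ⟨c, HSet_subset h1 (hM.1 hκM), h2,
        fun ⟨α, hα, hα0, hαc⟩ => not_cof_of_finite hα0 (h3 α hα) hαc⟩
    obtain ⟨s, hsM, hsκ, hs⟩ := el_bound hM haM hκM hb
    have hfin : {y | y ∈ a ∧ y ∈ x}.Finite :=
      (hxf s (hcap s hsκ hsM)).subset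
        (fun y hy => ⟨hs y hy.1 (hκ.mem_trans (hxδ hy.2) hδκ), hy.2⟩)
    obtain ⟨z, hz, hzs⟩ := hfinM _ hfin (fun y hy => hsub y (hxδ hy.2))
    have : a ∩ x = z := by
      ext y
      rw [hzs, ZFSet.mem_inter]
      rfl
    exact this ▸ hz
  obtain ⟨y, hyM, hy⟩ := (hg x ⟨κ, hκM, fun z hz => hκ.mem_trans (hxδ hz) hδκ⟩).1 happ
  have hyx : ∀ z ∈ M, z ∈ y ↔ z ∈ x := by
    intro z hz
    have h : z ∈ y ∩ M ↔ z ∈ x ∩ M := by rw [hy]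
    simpa [ZFSet.mem_inter, hz] using h
  obtain ⟨α, hαM, hακ, hα0, hαc⟩ := el_point hM hyM hκM ⟨δ, hδκ, hδ0, fun β hβ => by
    obtain ⟨γ, h1, h2, h3⟩ := hxc β hβ
    exact ⟨γ, h1, (hyx γ (hsub γ h1)).2 h2, h3⟩⟩
  have hαδ := hcap α hακ hαM
  refine not_cof_of_finite hα0 ((hxf α hαδ).subset ?_) hαc
  rintro z ⟨h1, h2⟩
  exact ⟨h1, (hyx z (hsub z (hδ.mem_trans h1 hαδ))).1 h2⟩

end GuessingPaper
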